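/- arXiv:1705.08539 — 2 statements merged into one kernel-verified Lean document; each statement's English description precedes it below -/
import Mathlib

section
/- Let d ≥ 1, n ≥ d+2, and let 𝓕 be a family of subsets of [n] such that the sets 𝓕_a (a ∈ [n]) are pairwise distinct and the dual family {𝓕_a : a ∈ [n]} is (2,d)-cover-free. Then 𝓕 has the Model 2'_d property: for every x ∈ [n], every D ⊆ [n] with |D| = d and x ∉ D, and every D' ⊆ [n] with |D'| = d and D' ≠ D, there exists F ∈ 𝓕 with x ∈ F such that exactly one of F ∩ D and F ∩ D' is nonempty. -/
/-- The dual family `{𝓕_a : a ∈ [n]}` of a family `𝓕` of subsets of `[n]`, where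
`𝓕_a = {F ∈ 𝓕 : a ∈ F}`. -/
def dualFam {n : ℕ} (𝓕 : Finset (Finset (Fin n))) : Finset (Finset (Finset (Fin n))) :=
  Finset.univ.image (fun a : Fin n => 𝓕.filter (fun F => a ∈ F))

/-!
As `D' ≠ D` have the same size, there is `w ∈ D' \ D`. Extend `{x, w}` to a two-element set `Y`
disjoint from `D`; if `w = x`, any further element outside `D` will do. Cover-freeness of the dual
family, applied to `Y` and `D`, gives a query that contains `x`, meets `D'` in `w` and misses `D`.
-/

/-- An indexed family `S` is `(r, d)`-cover-free if the intersection of `r` of its members is never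
contained in the union of `d` others. The `d + r` members are distinguished by their indices, so for
injective `S` this is cover-freeness of the family `{S a}`. -/
def IsCoverFree {ι β : Type*} (r d : ℕ) (S : ι → Set β) : Prop :=
  ∀ g : Fin (d + r) → ι, Function.Injective g →
    ¬ (⋂ j : Fin r, S (g (Fin.natAdd d j))) ⊆ ⋃ i : Fin d, S (g (Fin.castAdd r i))

section CoverFree

variable {ι β : Type*} {r d : ℕ}

theorem IsCoverFree.exists_mem_forall_notMem {S : ι → Set β} (hS : IsCoverFree r d S)
    {Y D : Finset ι} (hY : Y.card = r) (hD : D.card = d) (hYD : Disjoint Y D) :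
    ∃ b, (∀ y ∈ Y, b ∈ S y) ∧ ∀ z ∈ D, b ∉ S z := by
  let eY := (Y.equivFinOfCardEq hY).symm
  let eD := (D.equivFinOfCardEq hD).symm
  have hinj : Function.Injective (Fin.append (fun i => (eD i : ι)) fun j => (eY j : ι)) :=
    Fin.append_injective_iff.2
      ⟨Subtype.val_injective.comp eD.injective, Subtype.val_injective.comp eY.injective,
        fun i j h => Finset.disjoint_left.1 hYD (eY j).2 (h ▸ (eD i).2)⟩
  obtain ⟨b, hbY, hbD⟩ := Set.not_subset.1 (hS _ hinj)
  simp only [Fin.append_right, Set.mem_iInter] at hbY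
  simp only [Fin.append_left, Set.mem_iUnion, not_exists] at hbD
  refine ⟨b, fun y hy => ?_, fun z hz => ?_⟩
  · simpa [eY] using hbY (eY.symm ⟨y, hy⟩)
  · simpa [eD] using hbD (eD.symm ⟨z, hz⟩)

theorem exists_superset_disjoint_card_eq {X D : Finset ι} (hX : X.card ≤ r) (hXD : Disjoint X D)
    (hcard : ((D.card + r : ℕ) : ℕ∞) ≤ ENat.card ι) :
    ∃ Y : Finset ι, X ⊆ Y ∧ Disjoint Y D ∧ Y.card = r := by
  have hXDc : (X : Set ι) ⊆ (D : Set ι)ᶜ :=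
    Set.subset_compl_iff_disjoint_right.2 (Finset.disjoint_coe.2 hXD)
  have hDc : (r : ℕ∞) ≤ (D : Set ι)ᶜ.encard := by
    rw [← Set.encard_univ, ← Set.encard_add_encard_compl (D : Set ι),
      Set.encard_coe_eq_coe_finsetCard, Nat.cast_add] at hcard
    exact (ENat.add_le_add_iff_left (ENat.natCast_ne_top _)).1 hcard
  obtain ⟨Y, hXY, hYD, hY⟩ := Set.exists_superset_subset_encard_eq hXDc
    (by rw [Set.encard_coe_eq_coe_finsetCard]; exact_mod_cast hX) hDc
  lift Y to Finset ι using Set.finite_of_encard_eq_coe hY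
  refine ⟨Y, Finset.coe_subset.1 hXY, ?_, ?_⟩
  · exact Finset.disjoint_coe.1 (Set.subset_compl_iff_disjoint_right.1 hYD)
  · rwa [Set.encard_coe_eq_coe_finsetCard, Nat.cast_inj] at hY

theorem dual_two_d_coverFree_implies_model2dprime_general {Q : β → Set ι}
    (hQ : IsCoverFree (r + 1) d fun a => {t | a ∈ Q t})
    (hcard : ((d + (r + 1) : ℕ) : ℕ∞) ≤ ENat.card ι) {X D D' : Finset ι} (hX : X.card ≤ r)
    (hD : D.card = d) (hXD : Disjoint X D) (hD' : ¬ D' ⊆ D) :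
    ∃ t, ↑X ⊆ Q t ∧ (Q t ∩ D').Nonempty ∧ ¬ (Q t ∩ D).Nonempty := by
  classical
  obtain ⟨w, hwD', hwD⟩ := Finset.not_subset.1 hD'
  obtain ⟨Y, hwXY, hYD, hY⟩ : ∃ Y : Finset ι, insert w X ⊆ Y ∧ Disjoint Y D ∧ Y.card = r + 1 :=
    exists_superset_disjoint_card_eq ((Finset.card_insert_le w X).trans (Nat.succ_le_succ hX))
      (Finset.disjoint_insert_left.2 ⟨hwD, hXD⟩) (hD ▸ hcard)
  obtain ⟨hwY, hXY⟩ := Finset.insert_subset_iff.1 hwXY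
  obtain ⟨t, htY, htD⟩ := hQ.exists_mem_forall_notMem hY hD hYD
  exact ⟨t, fun x hx => htY x (hXY hx), ⟨w, htY w hwY, hwD'⟩, fun ⟨z, hzt, hzD⟩ => htD z hzD hzt⟩

end CoverFree

theorem isCoverFree_two_of_dualFam {n d : ℕ} {𝓕 : Finset (Finset (Fin n))}
    (hdist : ∀ a b : Fin n,
      𝓕.filter (fun F => a ∈ F) = 𝓕.filter (fun F => b ∈ F) → a = b)
    (hcf : ¬ ∃ G : Fin (d + 2) → Finset (Finset (Fin n)),
      Function.Injective G ∧
      (∀ i, G i ∈ dualFam 𝓕) ∧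
      G ⟨d, by omega⟩ ∩ G (Fin.last (d + 1)) ⊆
        (Finset.univ : Finset (Fin d)).sup (fun i => G (Fin.castLE (by omega) i))) :
    IsCoverFree 2 d fun a : Fin n => {F : 𝓕 | a ∈ (F.1 : Set (Fin n))} := by
  intro g hg hsub
  refine hcf ⟨fun i => 𝓕.filter (g i ∈ ·), fun i j hij => hg (hdist _ _ hij),
    fun i => Finset.mem_image_of_mem _ (Finset.mem_univ _), fun F hF => ?_⟩
  rw [Finset.mem_inter, Finset.mem_filter, Finset.mem_filter] at hF
  obtain ⟨⟨hF𝓕, hFd⟩, -, hFlast⟩ := hF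
  obtain ⟨i, hi⟩ := Set.mem_iUnion.1 <|
    @hsub ⟨F, hF𝓕⟩ <| Set.mem_iInter.2 <| Fin.forall_fin_two.2 ⟨hFd, hFlast⟩
  exact Finset.mem_sup.2 ⟨i, Finset.mem_univ i, Finset.mem_filter.2 ⟨hF𝓕, hi⟩⟩

/-- if `d ≥ 1`, `n ≥ d+2`, the sets `𝓕_a` are pairwise distinct and the dual
family is `(2,d)`-cover-free (no `d+2` pairwise distinct members with the intersection of the
last two contained in the union of the first `d`), then `𝓕` has the Model 2'_d property. -/
theorem dual_two_d_coverFree_implies_model2dprime (n d : ℕ) (hd : 1 ≤ d) (hn : d + 2 ≤ n)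
    (𝓕 : Finset (Finset (Fin n)))
    (hdist : ∀ a b : Fin n,
      𝓕.filter (fun F => a ∈ F) = 𝓕.filter (fun F => b ∈ F) → a = b)
    (hcf : ¬ ∃ G : Fin (d + 2) → Finset (Finset (Fin n)),
      Function.Injective G ∧
      (∀ i, G i ∈ dualFam 𝓕) ∧
      G ⟨d, by omega⟩ ∩ G (Fin.last (d + 1)) ⊆
        (Finset.univ : Finset (Fin d)).sup (fun i => G (Fin.castLE (by omega) i))) :
    ∀ x : Fin n, ∀ D : Finset (Fin n), D.card = d → x ∉ D →
      ∀ D' : Finset (Fin n), D'.card = d → D' ≠ D →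
        ∃ F ∈ 𝓕, x ∈ F ∧
          (((F ∩ D).Nonempty ∧ ¬ (F ∩ D').Nonempty) ∨
            ((F ∩ D').Nonempty ∧ ¬ (F ∩ D).Nonempty)) := by
  intro x D hD hx D' hD'card hne
  have hD' : ¬ D' ⊆ D := fun h => hne (Finset.eq_of_subset_of_card_le h (hD.trans hD'card.symm).le)
  obtain ⟨⟨F, hF⟩, hxF, hFD', hFD⟩ := dual_two_d_coverFree_implies_model2dprime_general
    (isCoverFree_two_of_dualFam hdist hcf) (by simpa using mod_cast hn)
    (Finset.card_singleton x).le hD (Finset.disjoint_singleton_left.2 hx) hD'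
  exact ⟨F, hF, by simpa using hxF, Or.inr ⟨mod_cast hFD', mod_cast hFD⟩⟩
end

section
/- Let d ≥ 1, n ≥ d+1, let 𝓕 be a family of subsets of [n] such that the sets 𝓕_a (a ∈ [n]) are pairwise distinct, let 𝓖 := {𝓕_a : a ∈ [n]} be the dual family, and let 𝓖^d := {G_1 ∪ ⋯ ∪ G_d : G_1,…,G_d pairwise distinct members of 𝓖}. Then 𝓕 satisfies properties •1 and •2 if and only if 𝓖 is d-union-free, 𝓖^d is Sperner, and 𝓖^d is intersection cancellative. Here •1 is: for any two distinct X, Y ⊆ [n] with |X| = |Y| = d there exists F ∈ 𝓕 with F ∩ X ≠ ∅ and F ∩ Y = ∅; and •2 is: for any three pairwise distinct X, Y, Z ⊆ [n] with |X| = |Y| = |Z| = d there exists F ∈ 𝓕 with either (F ∩ X ≠ ∅, F ∩ Y ≠ ∅ and F ∩ Z = ∅) or (F ∩ X ≠ ∅, F ∩ Z ≠ ∅ and F ∩ Y = ∅). -/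
/-- `𝓖^d`: the family of all unions of `d` pairwise distinct members of `𝓖`. -/
def dFoldUnions {n : ℕ} (d : ℕ) (𝓖 : Finset (Finset (Finset (Fin n)))) :
    Set (Finset (Finset (Fin n))) :=
  {U | ∃ G : Fin d → Finset (Finset (Fin n)),
    Function.Injective G ∧ (∀ i, G i ∈ 𝓖) ∧ U = Finset.univ.sup G}

/-!
Each `d`-set `X ⊆ [n]` corresponds to the union `⋃_{a ∈ X} 𝓕_a`, which consists of the members of
`𝓕` meeting `X`. Property •1 says that no such union is contained in the union of another `d`-set,
that is, `X ↦ ⋃_{a ∈ X} 𝓕_a` is injective with a Sperner image. Once it is injective, property •2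
is precisely intersection cancellativity of the image. Only joins and meets of the sets `𝓕_a` enter,
so the equivalence holds for any injective family of elements of a lattice.
-/

section Image

variable {ι L : Type*} {f : ι → L} {s : Set ι}

theorem injOn_and_isAntichain_image_iff [PartialOrder L] :
    s.InjOn f ∧ IsAntichain (· ≤ ·) (f '' s) ↔
      ∀ i j, i ∈ s → j ∈ s → i ≠ j → ¬ f i ≤ f j := by
  constructor
  · rintro ⟨hinj, hanti⟩ i j hi hj hij
    exact hanti (Set.mem_image_of_mem f hi) (Set.mem_image_of_mem f hj) (hinj.ne hi hj hij)
  · intro h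
    refine ⟨fun i hi j hj hij ↦ by_contra fun hne ↦ h i j hi hj hne hij.le, ?_⟩
    rintro _ ⟨i, hi, rfl⟩ _ ⟨j, hj, rfl⟩ hne
    exact h i j hi hj (ne_of_apply_ne f hne)

/-- Intersection cancellativity of a family, for a set of elements of a meet-semilattice. -/
def IsInfCancellative [SemilatticeInf L] (𝓗 : Set L) : Prop :=
  ∀ A ∈ 𝓗, ∀ B ∈ 𝓗, ∀ C ∈ 𝓗, A ≠ B → A ≠ C → B ≠ C → A ⊓ B ≠ A ⊓ C

theorem isInfCancellative_image_iff [SemilatticeInf L] (hf : s.InjOn f) :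
    IsInfCancellative (f '' s) ↔ ∀ i j k, i ∈ s → j ∈ s → k ∈ s →
      i ≠ j → i ≠ k → j ≠ k → f i ⊓ f j ≠ f i ⊓ f k := by
  constructor
  · intro h i j k hi hj hk hij hik hjk
    exact h _ ⟨i, hi, rfl⟩ _ ⟨j, hj, rfl⟩ _ ⟨k, hk, rfl⟩
      (hf.ne hi hj hij) (hf.ne hi hk hik) (hf.ne hj hk hjk)
  · rintro h _ ⟨i, hi, rfl⟩ _ ⟨j, hj, rfl⟩ _ ⟨k, hk, rfl⟩ hij hik hjk
    exact h i j k hi hj hk (ne_of_apply_ne f hij) (ne_of_apply_ne f hik) (ne_of_apply_ne f hjk)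

end Image

section Subfamilies

variable {α L : Type*} {d : ℕ} {𝓖 : Set L} {g : α → L}

/-- The `d`-element subfamilies of `𝓖`: the choices of `d` pairwise distinct members of `𝓖`,
regardless of order. -/
def subfamilies (d : ℕ) (𝓖 : Set L) : Set (Finset L) :=
  {S | (S : Set L) ⊆ 𝓖 ∧ S.card = d}

theorem mem_subfamilies_iff_exists_tuple [DecidableEq L] {S : Finset L} :
    S ∈ subfamilies d 𝓖 ↔ ∃ G : Fin d → L,
      Function.Injective G ∧ (∀ i, G i ∈ 𝓖) ∧ Finset.image G Finset.univ = S := by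
  constructor
  · rintro ⟨hS, hcard⟩
    obtain ⟨G, rfl⟩ := Function.Embedding.exists_of_card_eq_finset
      ((Fintype.card_fin d).trans hcard.symm)
    exact ⟨G, G.injective, fun i ↦ hS (by simp), by rw [Finset.map_eq_image]⟩
  · rintro ⟨G, hG, hmem, rfl⟩
    exact ⟨by simpa [Set.range_subset_iff] using hmem,
      by rw [Finset.card_image_of_injective _ hG, Finset.card_fin]⟩

theorem subfamilies_range (hg : Function.Injective g) :
    subfamilies d (Set.range g) = Finset.map ⟨g, hg⟩ '' {X | X.card = d} := by
  classical
  ext S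
  constructor
  · rintro ⟨hS, rfl⟩
    obtain ⟨X, -, rfl⟩ := Finset.subset_set_image_iff.1 (Set.image_univ.symm ▸ hS)
    exact ⟨X, (Finset.card_image_of_injective X hg).symm, Finset.map_eq_image _ _⟩
  · rintro ⟨X, rfl, rfl⟩
    exact ⟨by simp, Finset.card_map _⟩

variable [SemilatticeSup L] [OrderBot L]

/-- `d`-union-freeness of a family, for a set of elements of a join-semilattice: a `d`-element
subfamily is determined by its join. -/
def IsSupFree (d : ℕ) (𝓖 : Set L) : Prop :=
  (subfamilies d 𝓖).InjOn fun S ↦ S.sup id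

/-- The family `𝓖^d`, for a set `𝓖` of elements of a join-semilattice: the joins of the `d`-element
subfamilies of `𝓖`. -/
def dFoldSups (d : ℕ) (𝓖 : Set L) : Set L :=
  (fun S ↦ S.sup id) '' subfamilies d 𝓖

theorem isSupFree_iff_forall_tuple [DecidableEq L] :
    IsSupFree d 𝓖 ↔ ∀ G H : Fin d → L, Function.Injective G → Function.Injective H →
      (∀ i, G i ∈ 𝓖) → (∀ i, H i ∈ 𝓖) → Finset.univ.sup G = Finset.univ.sup H →
      Finset.image G Finset.univ = Finset.image H Finset.univ := by
  constructor
  · intro h G H hG hH hG𝓖 hH𝓖 hsup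
    refine h (mem_subfamilies_iff_exists_tuple.2 ⟨G, hG, hG𝓖, rfl⟩)
      (mem_subfamilies_iff_exists_tuple.2 ⟨H, hH, hH𝓖, rfl⟩) ?_
    simpa only [Finset.sup_image, Function.id_comp] using hsup
  · intro h S hS T hT hsup
    obtain ⟨G, hG, hG𝓖, rfl⟩ := mem_subfamilies_iff_exists_tuple.1 hS
    obtain ⟨H, hH, hH𝓖, rfl⟩ := mem_subfamilies_iff_exists_tuple.1 hT
    simp only [Finset.sup_image, Function.id_comp] at hsup
    exact h G H hG hH hG𝓖 hH𝓖 hsup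

theorem mem_dFoldSups_iff_exists_tuple {U : L} :
    U ∈ dFoldSups d 𝓖 ↔ ∃ G : Fin d → L,
      Function.Injective G ∧ (∀ i, G i ∈ 𝓖) ∧ U = Finset.univ.sup G := by
  classical
  constructor
  · rintro ⟨S, hS, rfl⟩
    obtain ⟨G, hG, hG𝓖, rfl⟩ := mem_subfamilies_iff_exists_tuple.1 hS
    exact ⟨G, hG, hG𝓖, Finset.sup_image _ _ _⟩
  · rintro ⟨G, hG, hG𝓖, rfl⟩
    exact ⟨_, mem_subfamilies_iff_exists_tuple.2 ⟨G, hG, hG𝓖, rfl⟩, Finset.sup_image _ _ _⟩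

theorem isSupFree_range_iff (hg : Function.Injective g) :
    IsSupFree d (Set.range g) ↔ {X : Finset α | X.card = d}.InjOn fun X ↦ X.sup g := by
  rw [IsSupFree, subfamilies_range hg, ← (Finset.map_injective _).injOn.comp_iff]
  simp only [Function.comp_def, Finset.sup_map, id, Function.Embedding.coeFn_mk]

theorem dFoldSups_range (hg : Function.Injective g) :
    dFoldSups d (Set.range g) = (fun X ↦ X.sup g) '' {X : Finset α | X.card = d} := by
  rw [dFoldSups, subfamilies_range hg, Set.image_image]
  simp only [Function.comp_def, Finset.sup_map, id, Function.Embedding.coeFn_mk]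

end Subfamilies

theorem bullets_iff_unionFree_sperner_intCancellative_general {α L : Type*} [Lattice L]
    [OrderBot L] (d : ℕ) (g : α → L) (hg : Function.Injective g) :
    ((∀ X Y : Finset α, X.card = d → Y.card = d → X ≠ Y → ¬ X.sup g ≤ Y.sup g) ∧
      (∀ X Y Z : Finset α, X.card = d → Y.card = d → Z.card = d → X ≠ Y → X ≠ Z → Y ≠ Z →
        X.sup g ⊓ Y.sup g ≠ X.sup g ⊓ Z.sup g)) ↔
    (IsSupFree d (Set.range g) ∧
      IsAntichain (· ≤ ·) (dFoldSups d (Set.range g)) ∧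
      IsInfCancellative (dFoldSups d (Set.range g))) := by
  rw [isSupFree_range_iff hg, dFoldSups_range hg, ← and_assoc, injOn_and_isAntichain_image_iff]
  exact and_congr_right fun h ↦
    (isInfCancellative_image_iff (injOn_and_isAntichain_image_iff.2 h).1).symm

section Star

variable {α : Type*} [DecidableEq α] {𝓕 : Finset (Finset α)} {X Y Z : Finset α}

/-- The set `𝓕_a` of the members of `𝓕` containing `a`. -/
def starFamily (𝓕 : Finset (Finset α)) (a : α) : Finset (Finset α) :=
  𝓕.filter (a ∈ ·)

theorem mem_sup_starFamily {F : Finset α} :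
    F ∈ X.sup (starFamily 𝓕) ↔ F ∈ 𝓕 ∧ (F ∩ X).Nonempty := by
  simp only [starFamily, Finset.mem_sup, Finset.mem_filter, Finset.Nonempty, Finset.mem_inter]
  grind

theorem not_sup_starFamily_le_iff :
    ¬ X.sup (starFamily 𝓕) ≤ Y.sup (starFamily 𝓕) ↔
      ∃ F ∈ 𝓕, (F ∩ X).Nonempty ∧ F ∩ Y = ∅ := by
  rw [Finset.not_subset]
  refine exists_congr fun F ↦ ?_
  simp only [mem_sup_starFamily, ← Finset.not_nonempty_iff_eq_empty]
  tauto

theorem sup_starFamily_inf_ne_iff :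
    X.sup (starFamily 𝓕) ⊓ Y.sup (starFamily 𝓕) ≠ X.sup (starFamily 𝓕) ⊓ Z.sup (starFamily 𝓕) ↔
      ∃ F ∈ 𝓕, ((F ∩ X).Nonempty ∧ (F ∩ Y).Nonempty ∧ F ∩ Z = ∅) ∨
        ((F ∩ X).Nonempty ∧ (F ∩ Z).Nonempty ∧ F ∩ Y = ∅) := by
  rw [ne_eq, Finset.ext_iff, not_forall]
  refine exists_congr fun F ↦ ?_
  simp only [Finset.inf_eq_inter, Finset.mem_inter, mem_sup_starFamily,
    ← Finset.not_nonempty_iff_eq_empty]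
  tauto

end Star

theorem coe_dualFam {n : ℕ} (𝓕 : Finset (Finset (Fin n))) :
    (dualFam 𝓕 : Set (Finset (Finset (Fin n)))) = Set.range (starFamily 𝓕) := by
  simp [dualFam, starFamily, Set.range]

theorem dFoldUnions_eq_dFoldSups {n d : ℕ} (𝓖 : Finset (Finset (Finset (Fin n)))) :
    dFoldUnions d 𝓖 = dFoldSups d (𝓖 : Set (Finset (Finset (Fin n)))) :=
  Set.ext fun _ ↦ mem_dFoldSups_iff_exists_tuple.symm

/-- for `d ≥ 1`, `n ≥ d+1` and `𝓕` with pairwise distinct `𝓕_a`, properties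
•1 and •2 hold iff the dual family `𝓖` is `d`-union-free, `𝓖^d` is Sperner and `𝓖^d` is
intersection cancellative. -/
theorem bullets_iff_unionFree_sperner_intCancellative (n d : ℕ) (hd : 1 ≤ d) (hn : d + 1 ≤ n)
    (𝓕 : Finset (Finset (Fin n)))
    (hdist : ∀ a b : Fin n,
      𝓕.filter (fun F => a ∈ F) = 𝓕.filter (fun F => b ∈ F) → a = b) :
    ((∀ X Y : Finset (Fin n), X.card = d → Y.card = d → X ≠ Y →
        ∃ F ∈ 𝓕, (F ∩ X).Nonempty ∧ F ∩ Y = ∅) ∧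
      (∀ X Y Z : Finset (Fin n), X.card = d → Y.card = d → Z.card = d →
        X ≠ Y → X ≠ Z → Y ≠ Z →
        ∃ F ∈ 𝓕, ((F ∩ X).Nonempty ∧ (F ∩ Y).Nonempty ∧ F ∩ Z = ∅) ∨
          ((F ∩ X).Nonempty ∧ (F ∩ Z).Nonempty ∧ F ∩ Y = ∅))) ↔
    ((∀ G H : Fin d → Finset (Finset (Fin n)),
        Function.Injective G → Function.Injective H →
        (∀ i, G i ∈ dualFam 𝓕) → (∀ i, H i ∈ dualFam 𝓕) →
        Finset.univ.sup G = Finset.univ.sup H →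
        Finset.image G Finset.univ = Finset.image H Finset.univ) ∧
      (∀ A ∈ dFoldUnions d (dualFam 𝓕), ∀ B ∈ dFoldUnions d (dualFam 𝓕),
        A ≠ B → ¬ A ⊆ B) ∧
      (∀ A ∈ dFoldUnions d (dualFam 𝓕), ∀ B ∈ dFoldUnions d (dualFam 𝓕),
        ∀ C ∈ dFoldUnions d (dualFam 𝓕),
        A ≠ B → A ≠ C → B ≠ C → A ∩ B ≠ A ∩ C)) := by
  have lattice_form :=
    bullets_iff_unionFree_sperner_intCancellative_general d (starFamily 𝓕) hdist
  simp only [not_sup_starFamily_le_iff, sup_starFamily_inf_ne_iff, ← coe_dualFam,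
    isSupFree_iff_forall_tuple, Finset.mem_coe, ← dFoldUnions_eq_dFoldSups] at lattice_form
  exact lattice_form
end
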